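/- arXiv:1311.1193 — 4 statements merged into one kernel-verified Lean document; each statement's English description precedes it below -/
import Mathlib

section
/- Let p be a natural number with p > 1 and let α, β ∈ Ξ_p. The multipliers Ψ_α and Ψ_β on ℤ[1/p] × ℤ[1/p] are cohomologous if and only if α = β. -/
/-!
The antisymmetrization `σ g h / σ h g` of a multiplier on an abelian group is unchanged by
coboundaries, because `f g * f h * (f (g + h))⁻¹` is symmetric in `g` and `h`. For `Ψ_α`, its value
at `(1/p^n, 0)` and `(0, 1)` is `exp (2πi α_n)`, so the cohomology class of `Ψ_α` determines every
`α_n` modulo `1`.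
-/

open scoped Real

/-- The additive subgroup `ℤ[1/p]` of `ℚ` of `p`-adic rationals. -/
def pAdicRat (p : ℕ) : AddSubgroup ℚ where
  carrier := {r : ℚ | ∃ (z : ℤ) (k : ℕ), r * (p : ℚ) ^ k = z}
  zero_mem' := ⟨0, 0, by simp⟩
  add_mem' := by
    rintro a b ⟨z1, k1, h1⟩ ⟨z2, k2, h2⟩
    refine ⟨z1 * (p : ℤ) ^ k2 + z2 * (p : ℤ) ^ k1, k1 + k2, ?_⟩
    push_cast
    calc (a + b) * (p : ℚ) ^ (k1 + k2)
        = (a * (p : ℚ) ^ k1) * (p : ℚ) ^ k2 + (b * (p : ℚ) ^ k2) * (p : ℚ) ^ k1 := by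
          rw [pow_add]; ring
      _ = (z1 : ℚ) * (p : ℚ) ^ k2 + (z2 : ℚ) * (p : ℚ) ^ k1 := by rw [h1, h2]
  neg_mem' := by
    rintro a ⟨z, k, h⟩
    exact ⟨-z, k, by push_cast; rw [neg_mul, h]⟩

lemma pAdicElem_mem (p : ℕ) (q : ℤ) (k : ℕ) : ((q : ℚ) / (p : ℚ) ^ k) ∈ pAdicRat p := by
  rcases Nat.eq_zero_or_pos p with h | h
  · exact ⟨0, 1, by simp [h]⟩
  · refine ⟨q, k, ?_⟩
    have : ((p : ℚ)) ^ k ≠ 0 := by positivity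
    field_simp

/-- The element `q / p^k` of `ℤ[1/p]`. -/
def pAdicElem (p : ℕ) (q : ℤ) (k : ℕ) : pAdicRat p :=
  ⟨(q : ℚ) / (p : ℚ) ^ k, pAdicElem_mem p q k⟩

/-- The set `Ξ_p` of sequences `α` with `α n ∈ [0,1)` and `p α_{n+1} ≡ α_n mod 1`,
with `p α_{n+1} - α_n ∈ {0, …, p-1}`. -/
def XiSeq (p : ℕ) (α : ℕ → ℝ) : Prop :=
  (∀ n, α n ∈ Set.Ico (0 : ℝ) 1) ∧ ∀ n, ∃ j : ℕ, j < p ∧ (p : ℝ) * α (n + 1) - α n = j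

/-- A `𝕋`-valued multiplier (normalized 2-cocycle) on a discrete abelian group. -/
def IsMultiplier {G : Type*} [AddCommGroup G] (σ : G → G → Circle) : Prop :=
  (∀ g h k : G, σ g h * σ (g + h) k = σ g (h + k) * σ h k) ∧
    ∀ g : G, σ g 0 = 1 ∧ σ 0 g = 1

/-- Two multipliers are cohomologous when they differ by a coboundary. -/
def AreCohomologous {G : Type*} [AddCommGroup G] (σ σ' : G → G → Circle) : Prop :=
  ∃ f : G → Circle, ∀ g h : G, σ g h = f g * f h * (f (g + h))⁻¹ * σ' g h

/-- The defining formula for the multiplier `Ψ_α` on `ℤ[1/p] × ℤ[1/p]`. -/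
def PsiFormula (p : ℕ) (α : ℕ → ℝ)
    (Ψ : (pAdicRat p × pAdicRat p) → (pAdicRat p × pAdicRat p) → Circle) : Prop :=
  ∀ (q1 q2 q3 q4 : ℤ) (k1 k2 k3 k4 : ℕ),
    Ψ (pAdicElem p q1 k1, pAdicElem p q2 k2) (pAdicElem p q3 k3, pAdicElem p q4 k4)
      = Circle.exp (2 * π * (α (k1 + k4) * q1 * q4))

/-- The antisymmetrization `(g, h) ↦ σ g h / σ h g` of a `𝕋`-valued function of two variables. For
a multiplier on an abelian group it is the commutator pairing of the central extension by `𝕋` that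
the multiplier defines. -/
noncomputable def antisymmetrization {G : Type*} (σ : G → G → Circle) (g h : G) : Circle :=
  σ g h / σ h g

section Cohomologous

variable {G : Type*} [AddCommGroup G]

theorem AreCohomologous.refl (σ : G → G → Circle) : AreCohomologous σ σ :=
  ⟨1, fun g h ↦ by simp only [Pi.one_apply, mul_one, inv_one, one_mul]⟩

theorem AreCohomologous.antisymmetrization_eq {σ σ' : G → G → Circle}
    (hσ : AreCohomologous σ σ') : antisymmetrization σ = antisymmetrization σ' := by
  obtain ⟨f, hf⟩ := hσ
  ext1 g
  ext1 h
  calc σ g h / σ h g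
      = (f g * f h * (f (g + h))⁻¹ * σ' g h) / (f g * f h * (f (g + h))⁻¹ * σ' h g) := by
        rw [hf g h, hf h g, mul_comm (f h), add_comm h]
    _ = σ' g h / σ' h g := mul_div_mul_left_eq_div _ _ _

end Cohomologous

theorem exists_eq_pAdicElem {p : ℕ} (hp : p ≠ 0) (x : pAdicRat p) :
    ∃ (q : ℤ) (k : ℕ), x = pAdicElem p q k := by
  obtain ⟨r, q, k, hr⟩ := x
  have hpk : (p : ℚ) ^ k ≠ 0 := pow_ne_zero k (Nat.cast_ne_zero.mpr hp)
  exact ⟨q, k, Subtype.ext (eq_div_of_mul_eq hpk hr)⟩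

namespace PsiFormula

variable {p : ℕ} {α β : ℕ → ℝ}
  {Ψα Ψβ : (pAdicRat p × pAdicRat p) → (pAdicRat p × pAdicRat p) → Circle}

theorem apply_eq_toCircle (hΨα : PsiFormula p α Ψα) (q₁ q₂ q₃ q₄ : ℤ) (k₁ k₂ k₃ k₄ : ℕ) :
    Ψα (pAdicElem p q₁ k₁, pAdicElem p q₂ k₂) (pAdicElem p q₃ k₃, pAdicElem p q₄ k₄) =
      AddCircle.toCircle ((q₁ * q₄) • (α (k₁ + k₄) : UnitAddCircle)) := by
  rw [hΨα, ← AddCircle.coe_zsmul, AddCircle.toCircle_apply_mk, div_one, zsmul_eq_mul,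
    Int.cast_mul, mul_assoc (α _), mul_comm (α _)]

theorem antisymmetrization_generators (hΨα : PsiFormula p α Ψα) (n : ℕ) :
    antisymmetrization Ψα (pAdicElem p 1 n, pAdicElem p 0 0) (pAdicElem p 0 0, pAdicElem p 1 0) =
      AddCircle.toCircle (α n : UnitAddCircle) := by
  simp only [antisymmetrization, hΨα.apply_eq_toCircle, mul_one, mul_zero, one_zsmul, zero_zsmul,
    AddCircle.toCircle_zero, add_zero, div_one]

theorem eq_of_forall_coe_eq (hp : p ≠ 0) (hΨα : PsiFormula p α Ψα) (hΨβ : PsiFormula p β Ψβ)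
    (hαβ : ∀ n, (α n : UnitAddCircle) = β n) : Ψα = Ψβ := by
  ext1 ⟨a, b⟩
  ext1 ⟨c, d⟩
  obtain ⟨q₁, k₁, rfl⟩ := exists_eq_pAdicElem hp a
  obtain ⟨q₂, k₂, rfl⟩ := exists_eq_pAdicElem hp b
  obtain ⟨q₃, k₃, rfl⟩ := exists_eq_pAdicElem hp c
  obtain ⟨q₄, k₄, rfl⟩ := exists_eq_pAdicElem hp d
  rw [hΨα.apply_eq_toCircle, hΨβ.apply_eq_toCircle, hαβ]

theorem coe_eq_of_areCohomologous (hΨα : PsiFormula p α Ψα) (hΨβ : PsiFormula p β Ψβ)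
    (hΨ : AreCohomologous Ψα Ψβ) (n : ℕ) : (α n : UnitAddCircle) = β n := by
  apply AddCircle.injective_toCircle one_ne_zero
  rw [← hΨα.antisymmetrization_generators, ← hΨβ.antisymmetrization_generators,
    hΨ.antisymmetrization_eq]

end PsiFormula

theorem psi_cohomologous_iff_eq_general {p : ℕ} (hp : p ≠ 0) {α β : ℕ → ℝ}
    {Ψα Ψβ : (pAdicRat p × pAdicRat p) → (pAdicRat p × pAdicRat p) → Circle}
    (hΨα : PsiFormula p α Ψα) (hΨβ : PsiFormula p β Ψβ) :
    AreCohomologous Ψα Ψβ ↔ ∀ n, (α n : UnitAddCircle) = β n := by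
  refine ⟨hΨα.coe_eq_of_areCohomologous hΨβ, fun hαβ ↦ ?_⟩
  rw [hΨα.eq_of_forall_coe_eq hp hΨβ hαβ]
  exact .refl Ψβ

/-- For `p > 1` and `α, β ∈ Ξ_p`, the multipliers `Ψ_α` and `Ψ_β` on
`ℤ[1/p] × ℤ[1/p]` are cohomologous if and only if `α = β`. -/
theorem psi_cohomologous_iff_eq (p : ℕ) (hp : 1 < p) (α β : ℕ → ℝ)
    (hα : XiSeq p α) (hβ : XiSeq p β)
    (Ψα Ψβ : (pAdicRat p × pAdicRat p) → (pAdicRat p × pAdicRat p) → Circle)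
    (hΨα : PsiFormula p α Ψα) (hΨβ : PsiFormula p β Ψβ) :
    AreCohomologous Ψα Ψβ ↔ α = β := by
  rw [psi_cohomologous_iff_eq_general (Nat.ne_zero_of_lt hp) hΨα hΨβ, funext_iff]
  exact forall_congr' fun n ↦ AddCircle.coe_eq_coe_iff_of_mem_Ico (a := 0)
    (by simpa only [zero_add] using hα.1 n) (by simpa only [zero_add] using hβ.1 n)
end

section
/- Let p be a natural number with p > 1. Every Schur multiplier ξ of ℤ[1/p] is cohomologous to ξ_J for some sequence of integers J = (J_k)_{k∈ℕ} with J_0 = 0 and J_{k+1} ≡ J_k (mod p^k) for all k. -/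
open scoped Real

/-- `q / p^k` is the reduced form of the rational `r`: it represents `r` and either `k = 0`
or `p` does not divide `q`. -/
def IsReducedForm (p : ℕ) (r : ℚ) (q : ℤ) (k : ℕ) : Prop :=
  r = (q : ℚ) / (p : ℚ) ^ k ∧ (k = 0 ∨ ¬ ((p : ℤ) ∣ q))

/-- The sequence of integers `J` defines a `p`-adic integer: `J 0 = 0` and
`J (k+1) ≡ J k (mod p^k)` for all `k`. -/
def IsPAdicSeq (p : ℕ) (J : ℕ → ℤ) : Prop :=
  J 0 = 0 ∧ ∀ k : ℕ, (p : ℤ) ^ k ∣ (J (k + 1) - J k)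

/-- The defining formula for the Schur multiplier `ξ_J` of `ℤ[1/p]`, written via reduced
forms of the arguments. -/
def XiJFormula (p : ℕ) (J : ℕ → ℤ) (ξ : pAdicRat p → pAdicRat p → ℚ) : Prop :=
  ∀ (r s : pAdicRat p) (q1 : ℤ) (k1 : ℕ) (q2 : ℤ) (k2 : ℕ),
    IsReducedForm p (r : ℚ) q1 k1 → IsReducedForm p (s : ℚ) q2 k2 →
      (k1 < k2 → ξ r s = -((q1 : ℚ) / (p : ℚ) ^ k1) * ((J k2 : ℚ) - J k1)) ∧
      (k2 < k1 → ξ r s = -((q2 : ℚ) / (p : ℚ) ^ k2) * ((J k1 : ℚ) - J k2)) ∧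
      (k1 = k2 → ∀ (q : ℤ) (m : ℕ), IsReducedForm p ((r : ℚ) + (s : ℚ)) q m →
        ξ r s = ((q : ℚ) / (p : ℚ) ^ m) * ((J k1 : ℚ) - J m))

/-!
The antisymmetrization of a 2-cocycle is biadditive and alternating, so it vanishes on a locally
cyclic group such as `ℤ[1/p]`. Hence `ξ` is symmetric, and since `ℚ` is injective, `ξ` is the
coboundary of some `h : ℤ[1/p] → ℚ`. Subtracting an additive map, we may assume `h 1 = 0`. As `ξ`
is integral, `h` is additive modulo `ℤ`, so that `J k = p ^ k * h (1 / p ^ k)` is an integer and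
`h r ≡ r * J k` modulo `ℤ` for `r = q / p ^ k`. The formula for `ξ_J` is the coboundary of
`r ↦ r * J k`, where `k` is the exponent of the reduced denominator of `r`, and `f` is the integral
difference of the two potentials.
-/

section Cocycles

variable {G A : Type*}

/-- The 2-cocycle identity for trivial coefficients. -/
def IsTwoCocycle [Add G] [Add A] (c : G → G → A) : Prop :=
  ∀ r s t, c r s + c (r + s) t = c r (s + t) + c s t

/-- The coboundary of a 1-cochain `h`, measuring its failure to be additive. -/
def twoCoboundary [Add G] [AddGroup A] (h : G → A) (r s : G) : A :=
  h r + h s - h (r + s)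

/-- A group in which any two elements lie in a common cyclic subgroup. -/
def IsLocallyCyclic (G : Type*) [AddGroup G] : Prop :=
  ∀ r s : G, ∃ t, r ∈ AddSubgroup.zmultiples t ∧ s ∈ AddSubgroup.zmultiples t

variable [AddCommGroup G] [AddCommGroup A]

theorem twoCoboundary_sub_addMonoidHom (h : G → A) (φ : G →+ A) :
    twoCoboundary (fun r => h r - φ r) = twoCoboundary h := by
  funext r s
  simp only [twoCoboundary, map_add]
  abel

theorem map_zsmul_sub_zsmul_mem {h : G → A} {S : AddSubgroup A}
    (hS : ∀ r s, twoCoboundary h r s ∈ S) (n : ℤ) (r : G) : h (n • r) - n • h r ∈ S := by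
  let φ : G →+ A ⧸ S := AddMonoidHom.mk' (fun r => (h r : A ⧸ S)) fun r s => by
    rw [← QuotientAddGroup.mk_add, eq_comm, QuotientAddGroup.eq_iff_sub_mem]
    exact hS r s
  rw [← QuotientAddGroup.eq_iff_sub_mem, QuotientAddGroup.mk_zsmul]
  exact map_zsmul φ n r

namespace IsTwoCocycle

variable {c : G → G → A}

theorem map {B : Type*} [AddCommGroup B] (hc : IsTwoCocycle c) (φ : A →+ B) :
    IsTwoCocycle fun r s => φ (c r s) := fun r s t => by
  simp only [← map_add, hc r s t]

theorem zero_left (hc : IsTwoCocycle c) (r : G) : c 0 r = c 0 0 := by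
  have h := hc 0 0 r
  rw [zero_add, zero_add] at h
  exact (add_right_cancel h).symm

theorem sub_swap_add_right (hc : IsTwoCocycle c) (r s t : G) :
    c r (s + t) - c (s + t) r = (c r s - c s r) + (c r t - c t r) := by
  have h₁ := hc r s t
  have h₂ := hc s t r
  have h₃ := hc s r t
  rw [add_comm t r] at h₂
  rw [add_comm s r] at h₃
  grind

/-- The commutator pairing of the central extension defined by `c`, i.e. the antisymmetrization
of `c`. -/
def commutatorPairing (hc : IsTwoCocycle c) : G →+ G →+ A :=
  AddMonoidHom.mk'
    (fun r => AddMonoidHom.mk' (fun s => c r s - c s r) (hc.sub_swap_add_right r))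
    fun r s => by
      ext t
      change c (r + s) t - c t (r + s) = (c r t - c t r) + (c s t - c t s)
      rw [← neg_sub, hc.sub_swap_add_right]
      abel

theorem commutatorPairing_apply (hc : IsTwoCocycle c) (r s : G) :
    hc.commutatorPairing r s = c r s - c s r := rfl

theorem symm_of_isLocallyCyclic (hc : IsTwoCocycle c) (hG : IsLocallyCyclic G) (r s : G) :
    c r s = c s r := by
  obtain ⟨t, ⟨m, rfl⟩, ⟨n, rfl⟩⟩ := hG r s
  have alternating : hc.commutatorPairing t t = 0 := sub_self _
  rw [← sub_eq_zero, ← hc.commutatorPairing_apply]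
  simp only [map_zsmul, AddMonoidHom.zsmul_apply, alternating, smul_zero]

end IsTwoCocycle

/-- A symmetric 2-cocycle, i.e. a factor set of an abelian extension of `G` by `A`. -/
structure SymmTwoCocycle (G A : Type*) [AddCommGroup G] [AddCommGroup A] where
  toFun : G → G → A
  isTwoCocycle : IsTwoCocycle toFun
  symm : ∀ r s, toFun r s = toFun s r

namespace SymmTwoCocycle

/-- The abelian extension of `G` by `A` with factor set `c`: the set `A × G`, with addition
twisted by `c`. As `c` need not be normalized, its zero is `(-c 0 0, 0)`. -/
@[ext]
structure Extension (c : SymmTwoCocycle G A) where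
  fiber : A
  base : G

namespace Extension

variable {c : SymmTwoCocycle G A}

instance : Add c.Extension :=
  ⟨fun x y => ⟨x.fiber + y.fiber + c.toFun x.base y.base, x.base + y.base⟩⟩

instance : Zero c.Extension := ⟨⟨-c.toFun 0 0, 0⟩⟩

instance : Neg c.Extension :=
  ⟨fun x => ⟨-x.fiber - c.toFun (-x.base) x.base - c.toFun 0 0, -x.base⟩⟩

theorem mk_add_mk (a b : A) (r s : G) :
    (⟨a, r⟩ + ⟨b, s⟩ : c.Extension) = ⟨a + b + c.toFun r s, r + s⟩ := rfl

theorem zero_def : (0 : c.Extension) = ⟨-c.toFun 0 0, 0⟩ := rfl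

theorem neg_mk (a : A) (r : G) :
    (-⟨a, r⟩ : c.Extension) = ⟨-a - c.toFun (-r) r - c.toFun 0 0, -r⟩ := rfl

protected theorem add_assoc (x y z : c.Extension) : x + y + z = x + (y + z) := by
  obtain ⟨a, r⟩ := x
  obtain ⟨b, s⟩ := y
  obtain ⟨d, t⟩ := z
  have cocycle := c.isTwoCocycle r s t
  simp only [mk_add_mk, Extension.mk.injEq, add_assoc, and_true]
  grind

protected theorem zero_add (x : c.Extension) : 0 + x = x := by
  obtain ⟨a, r⟩ := x
  rw [zero_def, mk_add_mk, c.isTwoCocycle.zero_left r, zero_add]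
  congr 1
  abel

protected theorem neg_add_cancel (x : c.Extension) : -x + x = 0 := by
  obtain ⟨a, r⟩ := x
  rw [neg_mk, mk_add_mk, zero_def, neg_add_cancel]
  congr 1
  abel

protected theorem add_comm (x y : c.Extension) : x + y = y + x := by
  obtain ⟨a, r⟩ := x
  obtain ⟨b, s⟩ := y
  rw [mk_add_mk, mk_add_mk, c.symm, add_comm a, add_comm r]

instance : AddCommGroup c.Extension where
  __ := AddGroup.ofLeftAxioms Extension.add_assoc Extension.zero_add Extension.neg_add_cancel
  add_comm := Extension.add_comm

variable (c) in
/-- The inclusion of the kernel `A` of the extension. -/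
def inl : A →+ c.Extension :=
  AddMonoidHom.mk' (fun a => ⟨a - c.toFun 0 0, 0⟩) fun a b => by
    rw [mk_add_mk, add_zero]
    congr 1
    abel

theorem inl_injective : Function.Injective (inl c) := fun _ _ hab =>
  sub_left_injective (congrArg fiber hab)

theorem inl_add_mk (a b : A) (r : G) : inl c a + ⟨b, r⟩ = ⟨a + b, r⟩ := by
  change (⟨a - c.toFun 0 0, 0⟩ + ⟨b, r⟩ : c.Extension) = _
  rw [mk_add_mk, c.isTwoCocycle.zero_left r, zero_add]
  congr 1
  abel

end Extension

-- A retraction of the extension onto its divisible kernel, restricted to the section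
-- `r ↦ (0, r)`, is the desired cochain.
theorem exists_eq_twoCoboundary [DivisibleBy A ℤ] (c : SymmTwoCocycle G A) :
    ∃ h : G → A, c.toFun = twoCoboundary h := by
  obtain ⟨ρ, hρ⟩ := (Module.Baer.of_divisible A).extension_property_addMonoidHom
    (Extension.inl c) Extension.inl_injective (AddMonoidHom.id A)
  refine ⟨fun r => ρ ⟨0, r⟩, funext₂ fun r s => eq_sub_of_add_eq ?_⟩
  calc c.toFun r s + ρ ⟨0, r + s⟩
      = ρ (Extension.inl c (c.toFun r s)) + ρ ⟨0, r + s⟩ := by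
        rw [← AddMonoidHom.comp_apply, hρ, AddMonoidHom.id_apply]
    _ = ρ (⟨0, r⟩ + ⟨0, s⟩) := by
        rw [← map_add, Extension.inl_add_mk, Extension.mk_add_mk, add_comm, add_zero]
    _ = ρ ⟨0, r⟩ + ρ ⟨0, s⟩ := map_add ρ _ _

end SymmTwoCocycle

theorem IsTwoCocycle.exists_eq_twoCoboundary [DivisibleBy A ℤ] {c : G → G → A}
    (hc : IsTwoCocycle c) (hG : IsLocallyCyclic G) : ∃ h : G → A, c = twoCoboundary h :=
  SymmTwoCocycle.exists_eq_twoCoboundary ⟨c, hc, hc.symm_of_isLocallyCyclic hG⟩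

end Cocycles

section ReducedForm

/-- The least `k` such that `r * p ^ k` is an integer, i.e. the exponent of the denominator in the
reduced form of `r`. It is the junk value `0` if `r` is not in `ℤ[1/p]`. -/
noncomputable def denomExp (p : ℕ) (r : ℚ) : ℕ :=
  sInf {k | ∃ z : ℤ, r * (p : ℚ) ^ k = z}

variable {p : ℕ} {r s : ℚ} {q₁ q₂ : ℤ} {k₁ k₂ : ℕ}

theorem IsReducedForm.denomExp_eq (hp : p ≠ 0) (hr : IsReducedForm p r q₁ k₁) :
    denomExp p r = k₁ := by
  refine IsLeast.csInf_eq ⟨⟨q₁, by rw [hr.1]; field_simp⟩, ?_⟩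
  rintro j ⟨z, hz⟩
  by_contra! hlt
  obtain ⟨d, rfl⟩ := Nat.exists_eq_add_of_lt hlt
  have hq : q₁ = p * (z * p ^ d) := by
    have : (q₁ : ℚ) = p * (z * p ^ d) := by
      rw [← hz, hr.1]
      field_simp
      ring
    exact_mod_cast this
  exact hr.2.resolve_left (by lia) (hq ▸ dvd_mul_right _ _)

theorem IsReducedForm.add_of_lt (hp : p ≠ 0) (hr : IsReducedForm p r q₁ k₁)
    (hs : IsReducedForm p s q₂ k₂) (hlt : k₁ < k₂) : ∃ q, IsReducedForm p (r + s) q k₂ := by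
  obtain ⟨d, rfl⟩ := Nat.exists_eq_add_of_lt hlt
  refine ⟨p * (q₁ * p ^ d) + q₂, ?_, Or.inr ?_⟩
  · rw [hr.1, hs.1]
    push_cast
    field_simp
    ring
  · rw [dvd_add_right (dvd_mul_right _ _)]
    exact hs.2.resolve_left (by lia)

theorem denomExp_add_of_lt (hp : p ≠ 0) (hr : IsReducedForm p r q₁ k₁)
    (hs : IsReducedForm p s q₂ k₂) (hlt : k₁ < k₂) : denomExp p (r + s) = k₂ :=
  (hr.add_of_lt hp hs hlt).elim fun _ hrs => hrs.denomExp_eq hp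

end ReducedForm

namespace pAdicRat

variable {p : ℕ}

/-- The element `1 / p ^ k` of `ℤ[1/p]`. -/
def invPow (p k : ℕ) : pAdicRat p :=
  ⟨1 / (p : ℚ) ^ k, by
    rcases eq_or_ne ((p : ℚ) ^ k) 0 with h | h
    · rw [h, div_zero]
      exact zero_mem _
    · exact ⟨1, k, by rw [one_div_mul_cancel h, Int.cast_one]⟩⟩

theorem coe_invPow (p k : ℕ) : (invPow p k : ℚ) = 1 / (p : ℚ) ^ k := rfl

theorem eq_zsmul_invPow {r : pAdicRat p} {q : ℤ} {k : ℕ} (hr : (r : ℚ) = q / (p : ℚ) ^ k) :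
    r = q • invPow p k :=
  Subtype.ext <| by
    rw [hr, AddSubgroup.coe_zsmul, coe_invPow, zsmul_eq_mul, mul_one_div]

theorem invPow_eq_zsmul_invPow_add (hp : p ≠ 0) (k d : ℕ) :
    invPow p k = ((p : ℤ) ^ d) • invPow p (k + d) :=
  eq_zsmul_invPow <| by
    rw [coe_invPow]
    push_cast
    field_simp
    rw [pow_add]

theorem isLocallyCyclic (hp : p ≠ 0) : IsLocallyCyclic (pAdicRat p) := by
  have hp' : (p : ℚ) ≠ 0 := Nat.cast_ne_zero.mpr hp
  have mem_zmultiples {r : pAdicRat p} {z : ℤ} {k : ℕ} (hr : (r : ℚ) * (p : ℚ) ^ k = z) (d : ℕ) :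
      r ∈ AddSubgroup.zmultiples (invPow p (k + d)) := by
    rw [eq_zsmul_invPow (eq_div_of_mul_eq (pow_ne_zero k hp') hr),
      invPow_eq_zsmul_invPow_add hp k d]
    exact zsmul_mem (zsmul_mem (AddSubgroup.mem_zmultiples _) _) _
  intro r s
  obtain ⟨z, k, hr⟩ := r.2
  obtain ⟨w, l, hs⟩ := s.2
  exact ⟨invPow p (k + l), mem_zmultiples hr l, add_comm l k ▸ mem_zmultiples hs k⟩

theorem exists_eq_zsmul_invPow_denomExp (hp : p ≠ 0) (r : pAdicRat p) :
    ∃ q : ℤ, r = q • invPow p (denomExp p r) := by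
  have hne : {k | ∃ z : ℤ, (r : ℚ) * (p : ℚ) ^ k = z}.Nonempty := by
    obtain ⟨z, k, hr⟩ := r.2
    exact ⟨k, z, hr⟩
  obtain ⟨q, hq⟩ := Nat.sInf_mem hne
  exact ⟨q, eq_zsmul_invPow (eq_div_of_mul_eq (pow_ne_zero _ (Nat.cast_ne_zero.mpr hp)) hq)⟩

/-- The 1-cochain `q / p ^ k ↦ (q / p ^ k) * J k` (in reduced form), whose coboundary
is `ξ_J`. -/
noncomputable def xiPotential (p : ℕ) (J : ℕ → ℤ) (r : pAdicRat p) : ℚ :=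
  r * J (denomExp p r)

theorem xiJFormula_twoCoboundary_xiPotential (hp : p ≠ 0) (J : ℕ → ℤ) :
    XiJFormula p J (twoCoboundary (xiPotential p J)) := by
  intro r s q₁ k₁ q₂ k₂ hr hs
  simp only [twoCoboundary, xiPotential, AddSubgroup.coe_add, hr.denomExp_eq hp,
    hs.denomExp_eq hp]
  refine ⟨fun hlt => ?_, fun hlt => ?_, fun heq q m hrs => ?_⟩
  · rw [denomExp_add_of_lt hp hr hs hlt, ← hr.1]
    ring
  · rw [add_comm (r : ℚ), denomExp_add_of_lt hp hs hr hlt, ← hs.1]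
    ring
  · rw [hrs.denomExp_eq hp, ← hrs.1, heq]
    ring

theorem exists_normalized_eq_twoCoboundary (hp : p ≠ 0) {c : pAdicRat p → pAdicRat p → ℚ}
    (hc : IsTwoCocycle c) :
    ∃ h : pAdicRat p → ℚ, h (invPow p 0) = 0 ∧ c = twoCoboundary h := by
  obtain ⟨h, rfl⟩ := hc.exists_eq_twoCoboundary (isLocallyCyclic hp)
  let φ : pAdicRat p →+ ℚ := (AddMonoidHom.mulRight (h (invPow p 0))).comp (pAdicRat p).subtype
  refine ⟨fun r => h r - φ r, ?_, (twoCoboundary_sub_addMonoidHom h φ).symm⟩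
  simp [φ, coe_invPow]

theorem exists_isPAdicSeq (hp : p ≠ 0) {h : pAdicRat p → ℚ}
    (hδ : ∀ r s, twoCoboundary h r s ∈ (Int.castAddHom ℚ).range) (h_one : h (invPow p 0) = 0) :
    ∃ J, IsPAdicSeq p J ∧ ∀ k, (J k : ℚ) = p ^ k * h (invPow p k) := by
  have integral (k : ℕ) : ∃ z : ℤ, (z : ℚ) = p ^ k * h (invPow p k) := by
    obtain ⟨z, hz⟩ := map_zsmul_sub_zsmul_mem hδ ((p : ℤ) ^ k) (invPow p (0 + k))
    rw [← invPow_eq_zsmul_invPow_add hp, h_one, zero_add, Int.coe_castAddHom] at hz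
    exact ⟨-z, by push_cast [hz, zsmul_eq_mul]; ring⟩
  choose J hJ using integral
  refine ⟨J, ⟨?_, fun k => ?_⟩, hJ⟩
  · have := hJ 0
    rw [h_one, mul_zero] at this
    exact_mod_cast this
  · obtain ⟨z, hz⟩ := map_zsmul_sub_zsmul_mem hδ ((p : ℤ) ^ 1) (invPow p (k + 1))
    rw [← invPow_eq_zsmul_invPow_add hp, Int.coe_castAddHom] at hz
    have : (J (k + 1) : ℚ) - J k = p ^ k * (-z : ℤ) := by
      rw [hJ, hJ]
      push_cast [hz, zsmul_eq_mul]
      ring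
    exact ⟨-z, by exact_mod_cast this⟩

theorem exists_int_eq_sub_xiPotential (hp : p ≠ 0) {h : pAdicRat p → ℚ} {J : ℕ → ℤ}
    (hδ : ∀ r s, twoCoboundary h r s ∈ (Int.castAddHom ℚ).range)
    (hJ : ∀ k, (J k : ℚ) = p ^ k * h (invPow p k)) (r : pAdicRat p) :
    ∃ z : ℤ, (z : ℚ) = h r - xiPotential p J r := by
  obtain ⟨q, hq⟩ := exists_eq_zsmul_invPow_denomExp hp r
  have potential_eq : xiPotential p J r = q • h (invPow p (denomExp p r)) := by
    have hr : (r : ℚ) = q * (1 / p ^ denomExp p r) := by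
      simpa only [AddSubgroup.coe_zsmul, coe_invPow, zsmul_eq_mul] using congrArg Subtype.val hq
    rw [xiPotential, hJ, zsmul_eq_mul]
    nth_rw 1 [hr]
    field_simp
  obtain ⟨z, hz⟩ := map_zsmul_sub_zsmul_mem hδ q (invPow p (denomExp p r))
  rw [← hq, ← potential_eq] at hz
  exact ⟨z, hz⟩

end pAdicRat

/-- For `p > 1`, every Schur multiplier `ξ` of `ℤ[1/p]` (an integer-valued
2-cocycle) is cohomologous to `ξ_J` for some sequence of integers `J` with `J 0 = 0` and
`J (k+1) ≡ J k (mod p^k)` for all `k`. -/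
theorem schur_multiplier_cohomologous_xiJ (p : ℕ) (hp : 1 < p)
    (ξ : pAdicRat p → pAdicRat p → ℤ)
    (hξ : ∀ r s t : pAdicRat p, ξ r s + ξ (r + s) t = ξ r (s + t) + ξ s t) :
    ∃ J : ℕ → ℤ, IsPAdicSeq p J ∧
      ∃ ξJ : pAdicRat p → pAdicRat p → ℚ, XiJFormula p J ξJ ∧
        ∃ f : pAdicRat p → ℤ, ∀ r s : pAdicRat p,
          (ξ r s : ℚ) - ξJ r s = ((f r : ℚ) + f s - f (r + s)) := by
  have hp' : p ≠ 0 := Nat.ne_zero_of_lt hp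
  have hξ' : IsTwoCocycle fun r s => (ξ r s : ℚ) := IsTwoCocycle.map hξ (Int.castAddHom ℚ)
  obtain ⟨h, h_one, hh⟩ := pAdicRat.exists_normalized_eq_twoCoboundary hp' hξ'
  have hδ (r s) : twoCoboundary h r s ∈ (Int.castAddHom ℚ).range := hh ▸ ⟨ξ r s, rfl⟩
  obtain ⟨J, hJ, hJh⟩ := pAdicRat.exists_isPAdicSeq hp' hδ h_one
  choose f hf using pAdicRat.exists_int_eq_sub_xiPotential hp' hδ hJh
  refine ⟨J, hJ, twoCoboundary (pAdicRat.xiPotential p J),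
    pAdicRat.xiJFormula_twoCoboundary_xiPotential hp' J, f, fun r s => ?_⟩
  rw [congrFun₂ hh r s, hf, hf, hf, twoCoboundary, twoCoboundary]
  ring
end

section
/- Let p be a natural number with p > 1, let α ∈ Ξ_p, and set J_k = p^k·α_k − α_0 for all k (so J = (J_k) is a sequence of integers with J_0 = 0 and J_{k+1} ≡ J_k (mod p^k)). Then there exists a unique group homomorphism τ : 𝒬_J → ℝ such that τ(1,0) = 1 and τ(0, 1/p^k) = α_k for all k ∈ ℕ. -/
/-!
Let `d r` be the exponent of `p` in the reduced form of `r ∈ ℤ[1/p]`. Whether or not `p` is prime,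
`d` is ultrametric: `d (r + s) ≤ max (d r) (d s)`, with equality whenever `d r ≠ d s`. This makes
the three cases of `ξ_J` one formula: over `ℚ` the cocycle is the coboundary of `r ↦ r * J (d r)`.
Hence the homomorphisms on `𝒬_J` sending `(1, 0)` to `1` are the maps
`(z, r) ↦ z + r * J (d r) + g r` with `g` additive on `ℤ[1/p]`. In characteristic zero
`g r = r * c`, and since `J k + α 0 = p ^ k * α k`, each single condition `τ (0, 1 / p ^ k) = α k`
amounts to `c = α 0`.
-/

open scoped Real

/-- The group operation `⊞` of `𝒬_J` on `ℤ × ℤ[1/p]`. -/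
def qOp (p : ℕ) (ξ : pAdicRat p → pAdicRat p → ℤ) :
    ℤ × pAdicRat p → ℤ × pAdicRat p → ℤ × pAdicRat p :=
  fun a b => (a.1 + b.1 + ξ a.2 b.2, a.2 + b.2)

theorem rat_coe_smul_map_comm {S : AddSubgroup ℚ} {M : Type*} [AddCommGroup M] [Module ℚ M]
    (f : S →+ M) (r s : S) : (s : ℚ) • f r = (r : ℚ) • f s := by
  have hrs : ((s : ℚ).num * (r : ℚ).den) • r = ((r : ℚ).num * (s : ℚ).den) • s := by
    ext
    simp only [AddSubgroup.coe_zsmul, zsmul_eq_mul, Int.cast_mul, Int.cast_natCast]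
    rw [mul_assoc, Rat.den_mul_eq_num, mul_assoc, Rat.den_mul_eq_num, mul_comm]
  have hf := congrArg f hrs
  rw [map_zsmul, map_zsmul, ← Int.cast_smul_eq_zsmul ℚ, ← Int.cast_smul_eq_zsmul ℚ] at hf
  have hden : ((r : ℚ).den * (s : ℚ).den : ℚ) ≠ 0 := by positivity
  apply smul_right_injective M hden
  simp only [smul_smul]
  convert hf using 2
  · push_cast
    rw [← Rat.mul_den_eq_num (s : ℚ)]
    ring
  · push_cast
    rw [← Rat.mul_den_eq_num (r : ℚ)]
    ring

namespace pAdicRat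

variable {p : ℕ}

/-- The exponent of `p` in the denominator of the reduced form of `r ∈ ℤ[1/p]`, encoded as the
least `k` with `r * p ^ k ∈ ℤ` so that its ultrametric behaviour needs no divisibility argument. -/
noncomputable def denExp (r : pAdicRat p) : ℕ :=
  sInf {k | ∃ z : ℤ, (r : ℚ) * (p : ℚ) ^ k = z}

theorem denExp_le_iff {r : pAdicRat p} {k : ℕ} :
    denExp r ≤ k ↔ ∃ z : ℤ, (r : ℚ) * (p : ℚ) ^ k = z := by
  refine ⟨fun h ↦ ?_, fun h ↦ Nat.sInf_le h⟩
  have hne : {k | ∃ z : ℤ, (r : ℚ) * (p : ℚ) ^ k = z}.Nonempty :=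
    let ⟨z, k, hz⟩ := r.2
    ⟨k, z, hz⟩
  obtain ⟨z, hz⟩ : ∃ z : ℤ, (r : ℚ) * (p : ℚ) ^ denExp r = z := Nat.sInf_mem hne
  obtain ⟨j, rfl⟩ := Nat.exists_eq_add_of_le h
  exact ⟨z * (p : ℤ) ^ j, by rw [pow_add, ← mul_assoc, hz]; push_cast; rfl⟩

theorem denExp_neg (r : pAdicRat p) : denExp (-r) = denExp r := by
  have neg_le (s : pAdicRat p) : denExp (-s) ≤ denExp s := by
    obtain ⟨z, hz⟩ := denExp_le_iff.1 (le_refl (denExp s))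
    exact denExp_le_iff.2 ⟨-z, by rw [AddSubgroup.coe_neg, neg_mul, hz, Int.cast_neg]⟩
  exact (neg_le r).antisymm (by simpa only [neg_neg] using neg_le (-r))

theorem denExp_add_le (r s : pAdicRat p) : denExp (r + s) ≤ max (denExp r) (denExp s) := by
  obtain ⟨z, hz⟩ := denExp_le_iff.1 (le_max_left (denExp r) (denExp s))
  obtain ⟨w, hw⟩ := denExp_le_iff.1 (le_max_right (denExp r) (denExp s))
  exact denExp_le_iff.2 ⟨z + w, by rw [AddSubgroup.coe_add, add_mul, hz, hw, Int.cast_add]⟩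

theorem denExp_add_eq_right {r s : pAdicRat p} (h : denExp r < denExp s) :
    denExp (r + s) = denExp s := by
  have hle := denExp_add_le r s
  have hge := denExp_add_le (-r) (r + s)
  rw [neg_add_cancel_left, denExp_neg] at hge
  omega

theorem denExp_add_eq_left {r s : pAdicRat p} (h : denExp s < denExp r) :
    denExp (r + s) = denExp r := by
  rw [add_comm, denExp_add_eq_right h]

theorem denExp_le_iff_dvd (hp : p ≠ 0) {r : pAdicRat p} {q : ℤ} {k : ℕ}
    (h : (r : ℚ) = q / (p : ℚ) ^ (k + 1)) : denExp r ≤ k ↔ (p : ℤ) ∣ q := by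
  have hp' : (p : ℚ) ≠ 0 := Nat.cast_ne_zero.2 hp
  have hr : (r : ℚ) * (p : ℚ) ^ k = q / p := by
    rw [h, pow_succ]
    field_simp
  rw [denExp_le_iff, hr]
  refine exists_congr fun z ↦ ?_
  rw [div_eq_iff hp', mul_comm]
  norm_cast

theorem isReducedForm_iff (hp : p ≠ 0) {r : pAdicRat p} {q : ℤ} {k : ℕ} :
    IsReducedForm p r q k ↔ (r : ℚ) = q / (p : ℚ) ^ k ∧ denExp r = k := by
  refine and_congr_right fun h ↦ ?_
  have hle : denExp r ≤ k :=
    denExp_le_iff.2 ⟨q, by rw [h, div_mul_cancel₀ _ (pow_ne_zero k (Nat.cast_ne_zero.2 hp))]⟩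
  cases k with
  | zero => simpa using hle
  | succ k =>
    rw [← denExp_le_iff_dvd hp h]
    omega

theorem exists_isReducedForm_denExp (hp : p ≠ 0) (r : pAdicRat p) :
    ∃ q : ℤ, IsReducedForm p r q (denExp r) := by
  obtain ⟨q, hq⟩ := denExp_le_iff.1 (le_refl (denExp r))
  have hpow : (p : ℚ) ^ denExp r ≠ 0 := pow_ne_zero _ (Nat.cast_ne_zero.2 hp)
  exact ⟨q, (isReducedForm_iff hp).2 ⟨(eq_div_iff hpow).2 hq, rfl⟩⟩

theorem denExp_pAdicElem_one (hp : 1 < p) (k : ℕ) : denExp (pAdicElem p 1 k) = k := by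
  have hunit : ¬ (p : ℤ) ∣ 1 := by
    rw [Int.natCast_dvd_ofNat, Nat.dvd_one]
    exact hp.ne'
  exact ((isReducedForm_iff (by omega)).1 ⟨rfl, Or.inr hunit⟩).2

/-- The rational 1-cochain `r ↦ r * J (denExp r)` on `ℤ[1/p]`, whose coboundary is `ξ_J`. -/
noncomputable def xiPrimitive (J : ℕ → ℤ) (r : pAdicRat p) : ℚ :=
  r * J (denExp r)

theorem xiPrimitive_zero (J : ℕ → ℤ) : xiPrimitive J (0 : pAdicRat p) = 0 := by
  simp [xiPrimitive]

end pAdicRat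

section Trace

open pAdicRat

variable {p : ℕ} {J : ℕ → ℤ}

theorem XiJFormula.eq_coboundary (hp : p ≠ 0) {ξ : pAdicRat p → pAdicRat p → ℚ}
    (hξ : XiJFormula p J ξ) (r s : pAdicRat p) :
    ξ r s = xiPrimitive J r + xiPrimitive J s - xiPrimitive J (r + s) := by
  obtain ⟨a, ha⟩ := exists_isReducedForm_denExp hp r
  obtain ⟨b, hb⟩ := exists_isReducedForm_denExp hp s
  obtain ⟨c, hc⟩ := exists_isReducedForm_denExp hp (r + s)
  obtain ⟨h_lt, h_gt, h_eq⟩ := hξ r s a _ b _ ha hb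
  simp only [xiPrimitive]
  rcases lt_trichotomy (denExp r) (denExp s) with h | h | h
  · rw [h_lt h, ← ha.1, denExp_add_eq_right h, AddSubgroup.coe_add]
    ring
  · rw [h_eq h c _ hc, ← hc.1, ← h, AddSubgroup.coe_add]
    ring
  · rw [h_gt h, ← hb.1, denExp_add_eq_left h, AddSubgroup.coe_add]
    ring

theorem qOp_hom_iff_of_coboundary {A : Type*} [AddCommGroupWithOne A] [CharZero A]
    {ξ : pAdicRat p → pAdicRat p → ℤ} {f : pAdicRat p → A} (hf0 : f 0 = 0)
    (hf : ∀ r s, (ξ r s : A) = f r + f s - f (r + s)) (τ : ℤ × pAdicRat p → A) :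
    ((∀ a b, τ (qOp p ξ a b) = τ a + τ b) ∧ τ (1, 0) = 1) ↔
      ∃ g : pAdicRat p →+ A, ∀ z r, τ (z, r) = z + f r + g r := by
  constructor
  · rintro ⟨hadd, hone⟩
    have hξ0 (r : pAdicRat p) : ξ 0 r = 0 :=
      Int.cast_injective (α := A) (by rw [hf, hf0, zero_add, zero_add, sub_self, Int.cast_zero])
    have hcentral (z : ℤ) (r : pAdicRat p) : τ (z, r) = τ (z, 0) + τ (0, r) := by
      rw [← hadd]
      simp [qOp, hξ0]
    let ι : ℤ →+ A := AddMonoidHom.mk' (fun z ↦ τ (z, 0)) fun z w ↦ by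
      rw [← hadd]
      simp [qOp, hξ0]
    have hint (z : ℤ) : τ (z, 0) = z :=
      DFunLike.congr_fun (AddMonoidHom.ext_int (f := ι) (g := Int.castAddHom A)
        (by simpa [ι] using hone)) z
    refine ⟨AddMonoidHom.mk' (fun r ↦ τ (0, r) - f r) fun r s ↦ ?_, fun z r ↦ ?_⟩
    · have hrs := hadd (0, r) (0, s)
      simp only [qOp, zero_add] at hrs
      rw [hcentral, hint, hf] at hrs
      rw [sub_add_sub_comm, ← hrs]
      abel
    · rw [hcentral, hint, AddMonoidHom.mk'_apply]
      abel
  · rintro ⟨g, hg⟩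
    refine ⟨fun ⟨z, r⟩ ⟨w, s⟩ ↦ ?_, by simp [hg, hf0]⟩
    simp only [qOp, hg, Int.cast_add, hf, map_add]
    abel

/-- The map `(z, r) ↦ z + r * J (denExp r) + r * c` on the underlying set of `𝒬_J`. It sends
`(0, 1)` to `J 0 + c`, so `c` is the free parameter of a trace on `𝒬_J`. -/
noncomputable def qTrace {K : Type*} [DivisionRing K] (J : ℕ → ℤ) (c : K)
    (x : ℤ × pAdicRat p) : K :=
  x.1 + (xiPrimitive J x.2 : K) + ((x.2 : ℚ) : K) * c

theorem qTrace_pAdicElem_one {K : Type*} [Field K] [CharZero K] (hp : 1 < p) (c : K) (k : ℕ) :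
    qTrace J c (0, pAdicElem p 1 k) = (J k + c) / (p : K) ^ k := by
  rw [qTrace, xiPrimitive, denExp_pAdicElem_one hp, pAdicElem]
  push_cast
  ring

theorem qOp_hom_iff_exists_qTrace {K : Type*} [Field K] [CharZero K] (hp : p ≠ 0)
    {ξ : pAdicRat p → pAdicRat p → ℤ} (hξ : XiJFormula p J (fun r s => (ξ r s : ℚ)))
    (τ : ℤ × pAdicRat p → K) :
    ((∀ a b, τ (qOp p ξ a b) = τ a + τ b) ∧ τ (1, 0) = 1) ↔ ∃ c : K, τ = qTrace J c := by
  have hcob (r s : pAdicRat p) : (ξ r s : K) =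
      xiPrimitive J r + xiPrimitive J s - xiPrimitive J (r + s) := by
    exact_mod_cast congrArg (Rat.cast : ℚ → K) (hξ.eq_coboundary hp r s)
  rw [qOp_hom_iff_of_coboundary (by simp [xiPrimitive_zero]) hcob]
  constructor
  · rintro ⟨g, hg⟩
    refine ⟨g (pAdicElem p 1 0), funext fun ⟨z, r⟩ ↦ ?_⟩
    have hlin : g r = ((r : ℚ) : K) * g (pAdicElem p 1 0) := by
      simpa [pAdicElem, Rat.smul_def] using rat_coe_smul_map_comm g r (pAdicElem p 1 0)
    rw [hg, hlin, qTrace]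
  · rintro ⟨c, rfl⟩
    let g : pAdicRat p →+ K :=
      (AddMonoidHom.mulRight c).comp ((Rat.castHom K : ℚ →+ K).comp (pAdicRat p).subtype)
    exact ⟨g, fun z r ↦ rfl⟩

end Trace

theorem qJ_unique_trace_general {K : Type*} [Field K] [CharZero K] (p : ℕ) (hp : 1 < p)
    (α : ℕ → K) (J : ℕ → ℤ) (hJ : ∀ k : ℕ, (J k : K) = (p : K) ^ k * α k - α 0)
    (ξ : pAdicRat p → pAdicRat p → ℤ)
    (hξ : XiJFormula p J (fun r s => (ξ r s : ℚ))) :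
    ∃! τ : ℤ × pAdicRat p → K,
      (∀ a b : ℤ × pAdicRat p, τ (qOp p ξ a b) = τ a + τ b) ∧
      τ (1, 0) = 1 ∧
      ∀ k : ℕ, τ (0, pAdicElem p 1 k) = α k := by
  have hom_iff (τ : ℤ × pAdicRat p → K) := qOp_hom_iff_exists_qTrace (by omega) hξ τ
  have value_iff (c : K) (k : ℕ) : qTrace J c (0, pAdicElem p 1 k) = α k ↔ c = α 0 := by
    have hpow : (p : K) ^ k ≠ 0 := pow_ne_zero k (Nat.cast_ne_zero.2 (by omega))
    rw [qTrace_pAdicElem_one hp, div_eq_iff hpow, hJ]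
    constructor <;> intro h <;> linear_combination h
  obtain ⟨hadd, hone⟩ := (hom_iff _).2 ⟨α 0, rfl⟩
  refine ⟨qTrace J (α 0), ⟨hadd, hone, fun k ↦ (value_iff _ k).2 rfl⟩, ?_⟩
  rintro τ ⟨hadd, hone, hval⟩
  obtain ⟨c, rfl⟩ := (hom_iff τ).1 ⟨hadd, hone⟩
  rw [(value_iff c 0).1 (hval 0)]

/-- For `p > 1`, `α ∈ Ξ_p` and `J_k = p^k α_k - α_0`, there is a unique
group homomorphism `τ : 𝒬_J → ℝ` with `τ(1,0) = 1` and `τ(0, 1/p^k) = α_k` for all `k`. -/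
theorem qJ_unique_trace (p : ℕ) (hp : 1 < p) (α : ℕ → ℝ) (hα : XiSeq p α)
    (J : ℕ → ℤ) (hJ : ∀ k : ℕ, (J k : ℝ) = (p : ℝ) ^ k * α k - α 0)
    (ξ : pAdicRat p → pAdicRat p → ℤ)
    (hξ : XiJFormula p J (fun r s => (ξ r s : ℚ))) :
    ∃! τ : ℤ × pAdicRat p → ℝ,
      (∀ a b : ℤ × pAdicRat p, τ (qOp p ξ a b) = τ a + τ b) ∧
      τ (1, 0) = 1 ∧
      ∀ k : ℕ, τ (0, pAdicElem p 1 k) = α k :=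
  qJ_unique_trace_general p hp α J hJ ξ hξ
end

section
/- Let p be a prime number, x ∈ ℚ_p with x ≠ 0, and θ ∈ ℝ with θ ≠ 0. Let D_{x,θ} = ι_{x,θ}(ℤ[1/p] × ℤ[1/p]). Then D_{x,θ}^⊥ = { ((t1, −t1), (x^{-1}·t2, −t2/θ)) : t1, t2 ∈ ℤ[1/p] }. -/
open scoped Real

/-- The Heisenberg multiplier `η` on `(ℚ_p × ℝ)² × (ℚ_p × ℝ)²`, defined via the `p`-adic
fractional part `frac`. -/
noncomputable def heisenbergMult (p : ℕ) [Fact p.Prime] (frac : ℚ_[p] → ℚ)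
    (m n : (ℚ_[p] × ℝ) × (ℚ_[p] × ℝ)) : Circle :=
  Circle.exp (2 * π * (m.1.2 * n.2.2)) * Circle.exp (2 * π * ((frac (m.1.1 * n.2.1) : ℝ)))

/-- The symmetrized version `ρ` of the Heisenberg multiplier. -/
noncomputable def heisenbergRho (p : ℕ) [Fact p.Prime] (frac : ℚ_[p] → ℚ)
    (m n : (ℚ_[p] × ℝ) × (ℚ_[p] × ℝ)) : Circle :=
  heisenbergMult p frac m n * (heisenbergMult p frac n m)⁻¹

/-- The embedding `ι_{x,θ} : ℤ[1/p]² → (ℚ_p × ℝ)²`, `(r1, r2) ↦ ((x r1, θ r1), (r2, r2))`. -/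
noncomputable def iotaEmb (p : ℕ) [Fact p.Prime] (x : ℚ_[p]) (θ : ℝ)
    (r : pAdicRat p × pAdicRat p) : (ℚ_[p] × ℝ) × (ℚ_[p] × ℝ) :=
  ((x * ((r.1 : ℚ) : ℚ_[p]), θ * ((r.1 : ℚ) : ℝ)), (((r.2 : ℚ) : ℚ_[p]), ((r.2 : ℚ) : ℝ)))

/-!
Write `χ (y, s) = exp (2πi (s + {y}_p))`, an additive character of the ring `ℚ_p × ℝ`. Then
`η(m, n) = χ (m₁ n₂)`, and `ι_{x,θ}(r₁, r₂) = ((x, θ) Δ(r₁), Δ(r₂))` with `Δ` the diagonal embedding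
of `ℚ`. Hence `n` annihilates `D_{x,θ}` exactly when both `n₁` and `(x, θ) n₂` annihilate
`Δ(ℤ[1/p])` under the self-pairing `(z, w) ↦ χ (z w)`, and everything reduces to computing that
one annihilator.

It is the antidiagonal `{(t, -t) : t ∈ ℤ[1/p]}`: testing `(a, s)` against `Δ(1)` forces
`-s ∈ ℤ[1/p]`, so after subtracting an antidiagonal element one may assume `s = 0`; then
`a p⁻ᵏ ∈ ℤ_p` for every `k`, that is, `a = 0`.
-/

section PAdicRat

variable {p : ℕ}

theorem mul_mem_pAdicRat {q r : ℚ} (hq : q ∈ pAdicRat p) (hr : r ∈ pAdicRat p) :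
    q * r ∈ pAdicRat p := by
  obtain ⟨y, j, hy⟩ := hq
  obtain ⟨z, k, hz⟩ := hr
  refine ⟨y * z, j + k, ?_⟩
  push_cast
  rw [pow_add, mul_mul_mul_comm, hy, hz]

theorem intCast_mem_pAdicRat (m : ℤ) : (m : ℚ) ∈ pAdicRat p :=
  ⟨m, 0, by simp⟩

theorem inv_pow_mem_pAdicRat (hp : p ≠ 0) (k : ℕ) : ((p : ℚ) ^ k)⁻¹ ∈ pAdicRat p :=
  ⟨1, k, by simp [hp]⟩

variable [Fact p.Prime]

theorem exists_eq_intCast_of_norm_le_one {q : ℚ} (hq : q ∈ pAdicRat p)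
    (hnorm : ‖(q : ℚ_[p])‖ ≤ 1) : ∃ m : ℤ, q = m := by
  obtain ⟨z, k, hz⟩ := hq
  have hpk : (p : ℚ) ^ k ≠ 0 := pow_ne_zero k (mod_cast (Fact.out : p.Prime).ne_zero)
  have hz' : (q : ℚ_[p]) * (p : ℚ_[p]) ^ k = (z : ℚ_[p]) :=
    mod_cast congrArg (Rat.cast : ℚ → ℚ_[p]) hz
  have hdvd : (p : ℤ) ^ k ∣ z := by
    rw [← Padic.norm_int_le_pow_iff_dvd, ← hz', norm_mul, Padic.norm_p_pow]
    exact mul_le_of_le_one_left (by positivity) hnorm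
  obtain ⟨m, rfl⟩ := hdvd
  refine ⟨m, mul_right_cancel₀ hpk ?_⟩
  rw [hz, mul_comm]
  push_cast
  rfl

theorem eq_zero_of_forall_norm_mul_pAdicRat_le_one {y : ℚ_[p]}
    (hy : ∀ r ∈ pAdicRat p, ‖y * (r : ℚ_[p])‖ ≤ 1) : y = 0 := by
  have hp : p.Prime := Fact.out
  by_contra hne
  obtain ⟨k, hk⟩ := pow_unbounded_of_one_lt ‖y‖⁻¹ (show 1 < (p : ℝ) from mod_cast hp.one_lt)
  have hle : ‖y‖ * (p : ℝ) ^ k ≤ 1 := by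
    simpa [Padic.norm_p] using hy _ (inv_pow_mem_pAdicRat hp.ne_zero k)
  exact hle.not_gt ((inv_lt_iff_one_lt_mul₀' (norm_pos_iff.mpr hne)).mp hk)

end PAdicRat

/-- `frac` assigns to each `y ∈ ℚ_p` a representative in `ℤ[1/p]` of its class modulo `ℤ_p`. The
`p`-adic fractional part is the representative in `[0, 1)`; the character `IsFracLift.stdChar` does
not depend on this normalization. -/
structure IsFracLift (p : ℕ) [Fact p.Prime] (frac : ℚ_[p] → ℚ) : Prop where
  mem_pAdicRat (y : ℚ_[p]) : frac y ∈ pAdicRat p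
  norm_sub_le_one (y : ℚ_[p]) : ‖y - (frac y : ℚ_[p])‖ ≤ 1

section StandardCharacter

open scoped FourierTransform

theorem fourierChar_eq_one_iff {s : ℝ} : 𝐞 s = 1 ↔ ∃ m : ℤ, s = m := by
  have hπ : 2 * π ≠ 0 := Real.two_pi_pos.ne'
  simp only [Real.fourierChar_apply', Circle.exp_eq_one, mul_comm (2 * π), mul_left_inj' hπ]

namespace IsFracLift

variable {p : ℕ} [Fact p.Prime] {frac : ℚ_[p] → ℚ}

theorem norm_sub_ratCast_le_one_iff (h : IsFracLift p frac) {y : ℚ_[p]} {q : ℚ}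
    (hq : q ∈ pAdicRat p) : ‖y - (q : ℚ_[p])‖ ≤ 1 ↔ ∃ m : ℤ, frac y = q + m := by
  constructor
  · intro hy
    have hnorm : ‖((frac y - q : ℚ) : ℚ_[p])‖ ≤ 1 := by
      rw [Rat.cast_sub, ← sub_add_sub_cancel _ y]
      refine (Padic.nonarchimedean _ _).trans (max_le ?_ hy)
      rw [norm_sub_rev]
      exact h.norm_sub_le_one y
    obtain ⟨m, hm⟩ := exists_eq_intCast_of_norm_le_one (sub_mem (h.mem_pAdicRat y) hq) hnorm
    exact ⟨m, sub_eq_iff_eq_add'.mp hm⟩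
  · rintro ⟨m, hm⟩
    have hsplit : y - (q : ℚ_[p]) = (y - (frac y : ℚ_[p])) + (m : ℚ_[p]) := by
      rw [hm]
      push_cast
      ring
    rw [hsplit]
    exact (Padic.nonarchimedean _ _).trans (max_le (h.norm_sub_le_one y) (Padic.norm_int_le_one m))

theorem exists_frac_add (h : IsFracLift p frac) (y z : ℚ_[p]) :
    ∃ m : ℤ, frac (y + z) = frac y + frac z + m := by
  refine (h.norm_sub_ratCast_le_one_iff
    (add_mem (h.mem_pAdicRat y) (h.mem_pAdicRat z))).mp ?_
  rw [Rat.cast_add, add_sub_add_comm]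
  exact (Padic.nonarchimedean _ _).trans (max_le (h.norm_sub_le_one y) (h.norm_sub_le_one z))

theorem exists_frac_ratCast (h : IsFracLift p frac) {t : ℚ} (ht : t ∈ pAdicRat p) :
    ∃ m : ℤ, frac (t : ℚ_[p]) = t + m :=
  (h.norm_sub_ratCast_le_one_iff ht).mp (by simp)

/-- The additive character `(y, s) ↦ exp (2πi (s + frac y))` of `ℚ_p × ℝ`, through which the
Heisenberg multiplier is expressed. -/
noncomputable def stdChar (h : IsFracLift p frac) : AddChar (ℚ_[p] × ℝ) Circle where
  toFun z := 𝐞 (z.2 + frac z.1)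
  map_zero_eq_one' := by
    obtain ⟨m, hm⟩ := h.exists_frac_ratCast (zero_mem _)
    exact fourierChar_eq_one_iff.mpr ⟨m, by simpa using congrArg (Rat.cast : ℚ → ℝ) hm⟩
  map_add_eq_mul' z w := by
    obtain ⟨m, hm⟩ := h.exists_frac_add z.1 w.1
    have hsum : (z + w).2 + (frac (z + w).1 : ℝ) =
        (z.2 + frac z.1) + (w.2 + frac w.1) + m := by
      rw [Prod.fst_add, hm, Prod.snd_add]
      push_cast
      ring
    rw [hsum, AddChar.map_add_eq_mul, AddChar.map_add_eq_mul,
      fourierChar_eq_one_iff.mpr ⟨m, rfl⟩, mul_one]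

theorem stdChar_apply (h : IsFracLift p frac) (z : ℚ_[p] × ℝ) :
    h.stdChar z = 𝐞 (z.2 + frac z.1) :=
  rfl

theorem stdChar_eq_one_iff (h : IsFracLift p frac) {z : ℚ_[p] × ℝ} :
    h.stdChar z = 1 ↔ ∃ m : ℤ, z.2 + (frac z.1 : ℝ) = m :=
  fourierChar_eq_one_iff

theorem norm_le_one_of_stdChar_eq_one (h : IsFracLift p frac) {y : ℚ_[p]}
    (hy : h.stdChar (y, 0) = 1) : ‖y‖ ≤ 1 := by
  obtain ⟨m, hm⟩ := h.stdChar_eq_one_iff.mp hy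
  have hfrac : frac y = 0 + m := by
    rw [zero_add] at hm ⊢
    exact mod_cast hm
  simpa using (h.norm_sub_ratCast_le_one_iff (zero_mem _)).mpr ⟨m, hfrac⟩

theorem stdChar_antidiagonal (h : IsFracLift p frac) {t : ℚ} (ht : t ∈ pAdicRat p) :
    h.stdChar ((t : ℚ_[p]), -(t : ℝ)) = 1 := by
  obtain ⟨m, hm⟩ := h.exists_frac_ratCast ht
  refine h.stdChar_eq_one_iff.mpr ⟨m, ?_⟩
  rw [hm]
  push_cast
  ring

theorem stdChar_antidiagonal_mul_diagonal (h : IsFracLift p frac) {t r : ℚ}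
    (ht : t ∈ pAdicRat p) (hr : r ∈ pAdicRat p) :
    h.stdChar (((t : ℚ_[p]), -(t : ℝ)) * algebraMap ℚ (ℚ_[p] × ℝ) r) = 1 := by
  simpa [Prod.algebraMap_apply] using h.stdChar_antidiagonal (mul_mem_pAdicRat ht hr)

theorem forall_stdChar_mul_diagonal_eq_one_iff (h : IsFracLift p frac) {z : ℚ_[p] × ℝ} :
    (∀ r : pAdicRat p, h.stdChar (z * algebraMap ℚ (ℚ_[p] × ℝ) r) = 1) ↔
      ∃ t : pAdicRat p, z = (((t : ℚ) : ℚ_[p]), -((t : ℚ) : ℝ)) := by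
  constructor
  · intro hz
    obtain ⟨a, s⟩ := z
    obtain ⟨m, hm⟩ : ∃ m : ℤ, s + (frac a : ℝ) = m := by
      simpa [stdChar_eq_one_iff] using hz ⟨1, mod_cast intCast_mem_pAdicRat 1⟩
    let t : pAdicRat p := ⟨frac a - m, sub_mem (h.mem_pAdicRat a) (intCast_mem_pAdicRat m)⟩
    have hs : s = -((t : ℚ) : ℝ) := by
      simp only [t, Rat.cast_sub, Rat.cast_intCast]
      linarith
    have hsplit : (a, s) = (a - ((t : ℚ) : ℚ_[p]), 0) + (((t : ℚ) : ℚ_[p]), -((t : ℚ) : ℝ)) := by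
      simp [hs]
    have hsub : a - ((t : ℚ) : ℚ_[p]) = 0 := by
      refine eq_zero_of_forall_norm_mul_pAdicRat_le_one fun r hr ↦
        h.norm_le_one_of_stdChar_eq_one ?_
      have hzr := hz ⟨r, hr⟩
      rw [hsplit, add_mul, AddChar.map_add_eq_mul, h.stdChar_antidiagonal_mul_diagonal t.2 hr,
        mul_one] at hzr
      simpa [Prod.algebraMap_apply] using hzr
    exact ⟨t, Prod.ext (sub_eq_zero.mp hsub) hs⟩
  · rintro ⟨t, rfl⟩ r
    exact h.stdChar_antidiagonal_mul_diagonal t.2 r.2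

theorem heisenbergMult_eq_stdChar (h : IsFracLift p frac) (m n : (ℚ_[p] × ℝ) × (ℚ_[p] × ℝ)) :
    heisenbergMult p frac m n = h.stdChar (m.1 * n.2) := by
  rw [stdChar_apply, AddChar.map_add_eq_mul]
  rfl

theorem heisenbergRho_iotaEmb (h : IsFracLift p frac) (x : ℚ_[p]) (θ : ℝ)
    (r : pAdicRat p × pAdicRat p) (n : (ℚ_[p] × ℝ) × (ℚ_[p] × ℝ)) :
    heisenbergRho p frac (iotaEmb p x θ r) n =
      h.stdChar ((x, θ) * n.2 * algebraMap ℚ (ℚ_[p] × ℝ) r.1) *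
        (h.stdChar (n.1 * algebraMap ℚ (ℚ_[p] × ℝ) r.2))⁻¹ := by
  rw [heisenbergRho, h.heisenbergMult_eq_stdChar, h.heisenbergMult_eq_stdChar,
    mul_right_comm (x, θ)]
  rfl

theorem forall_heisenbergRho_iotaEmb_eq_one_iff (h : IsFracLift p frac) {x : ℚ_[p]} {θ : ℝ}
    {n : (ℚ_[p] × ℝ) × (ℚ_[p] × ℝ)} :
    (∀ r, heisenbergRho p frac (iotaEmb p x θ r) n = 1) ↔
      (∃ t : pAdicRat p, n.1 = (((t : ℚ) : ℚ_[p]), -((t : ℚ) : ℝ))) ∧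
        ∃ t : pAdicRat p, (x, θ) * n.2 = (((t : ℚ) : ℚ_[p]), -((t : ℚ) : ℝ)) := by
  simp only [← h.forall_stdChar_mul_diagonal_eq_one_iff, h.heisenbergRho_iotaEmb]
  constructor
  · intro hn
    exact ⟨fun r ↦ by simpa [Prod.mk_zero_zero] using hn (0, r),
      fun r ↦ by simpa [Prod.mk_zero_zero] using hn (r, 0)⟩
  · rintro ⟨hfst, hsnd⟩ r
    rw [hfst, hsnd, inv_one, mul_one]

end IsFracLift

end StandardCharacter

theorem mk_mul_eq_mk_iff {K L : Type*} [CommGroupWithZero K] [CommGroupWithZero L]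
    {x t : K} {θ u : L} {w : K × L} (hx : x ≠ 0) (hθ : θ ≠ 0) :
    (x, θ) * w = (t, u) ↔ w = (x⁻¹ * t, u / θ) := by
  simp only [Prod.ext_iff, Prod.fst_mul, Prod.snd_mul, eq_inv_mul_iff_mul_eq₀ hx,
    eq_div_iff hθ, mul_comm θ]

/-- For `p` prime, `x ∈ ℚ_p \ {0}` and `θ ∈ ℝ \ {0}`, with
`D_{x,θ} = ι_{x,θ}(ℤ[1/p]²)`, the annihilator of `D_{x,θ}` with respect to the
symmetrized Heisenberg multiplier `ρ` is
`D_{x,θ}^⊥ = {((t1, -t1), (x⁻¹ t2, -t2/θ)) : t1, t2 ∈ ℤ[1/p]}`. -/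
theorem dPerp_computation (p : ℕ) [Fact p.Prime]
    (frac : ℚ_[p] → ℚ)
    (hfrac : ∀ y : ℚ_[p], frac y ∈ pAdicRat p ∧ 0 ≤ frac y ∧ frac y < 1 ∧
      ‖y - ((frac y : ℚ) : ℚ_[p])‖ ≤ 1)
    (x : ℚ_[p]) (hx : x ≠ 0) (θ : ℝ) (hθ : θ ≠ 0) :
    {n : (ℚ_[p] × ℝ) × (ℚ_[p] × ℝ) |
        ∀ d ∈ Set.range (iotaEmb p x θ), heisenbergRho p frac d n = 1} =
      {n : (ℚ_[p] × ℝ) × (ℚ_[p] × ℝ) | ∃ t1 t2 : pAdicRat p,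
        n = (((((t1 : ℚ) : ℚ_[p])), -((t1 : ℚ) : ℝ)),
             (x⁻¹ * (((t2 : ℚ) : ℚ_[p])), -(((t2 : ℚ) : ℝ) / θ))) } := by
  have h : IsFracLift p frac := ⟨fun y ↦ (hfrac y).1, fun y ↦ (hfrac y).2.2.2⟩
  ext n
  rw [Set.mem_ofPred_eq, Set.forall_mem_range, h.forall_heisenbergRho_iotaEmb_eq_one_iff]
  simp only [mk_mul_eq_mk_iff hx hθ, neg_div, exists_and_exists_comm, Prod.ext_iff (x := n),
    Set.mem_ofPred_eq]
end
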